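/- Let n ≥ 3, 1 ≤ k ≤ n, A diagonal in 𝒜_k (with λ_max(A) < 1/2 when k = 1), x₀ ∈ B_{1/2}(0)∖{0}, 0 < ε < 1/2, and c ≥ c*. Let u^ε be the unique k-convex solution of S_k(D²u) = 1 in ℝⁿ∖B̄_ε(x₀), u = 0 on ∂B_ε(x₀), lim_{|x|→∞}(u(x) − (½xᵀAx + c)) = 0, and let ũ^ε be its extension by 0 on B_ε(x₀). Then ũ^ε is k-convex in the generalized sense on all of ℝⁿ, i.e. ũ^ε ∈ Φ^k(ℝⁿ). -/

import Mathlib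

open scoped Classical Topology
open Real Filter MeasureTheory

noncomputable section

/-- Euclidean space ℝⁿ. -/
abbrev Euc (n : ℕ) : Type := EuclideanSpace ℝ (Fin n)

/-- The standard basis vector `e i`. -/
def ebasis (n : ℕ) (i : Fin n) : Euc n := EuclideanSpace.single i 1

/-- The Hessian matrix `D²u(x)`. -/
def hessMat (n : ℕ) (u : Euc n → ℝ) (x : Euc n) : Matrix (Fin n) (Fin n) ℝ :=
  Matrix.of fun i j => iteratedFDeriv ℝ 2 u x ![ebasis n i, ebasis n j]

/-- The Laplacian `Δu(x)` (trace of the Hessian). -/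
def lapl (n : ℕ) (u : Euc n → ℝ) (x : Euc n) : ℝ := ∑ i, hessMat n u x i i

/-- The `k`-th elementary symmetric function of the eigenvalues of an `n × n` matrix,
expressed through the coefficients of the characteristic polynomial. -/
def matSk (n k : ℕ) (M : Matrix (Fin n) (Fin n) ℝ) : ℝ :=
  (-1 : ℝ) ^ k * (Matrix.charpoly M).coeff (n - k)

/-- `S_k(D²u)(x)`. -/
def SkHess (n k : ℕ) (u : Euc n → ℝ) (x : Euc n) : ℝ := matSk n k (hessMat n u x)

/-- `u` is `k`-convex on `U`: the eigenvalues of the Hessian lie in the Gårding cone `Γ_k`. -/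
def KConvexOn (n k : ℕ) (u : Euc n → ℝ) (U : Set (Euc n)) : Prop :=
  ∀ x ∈ U, ∀ j : ℕ, 1 ≤ j → j ≤ k → 0 < matSk n j (hessMat n u x)

/-- Membership in the class `𝒜_k`: symmetric positive definite with `S_k(λ(A)) = 1`. -/
def MemA (n k : ℕ) (A : Matrix (Fin n) (Fin n) ℝ) : Prop :=
  A.IsSymm ∧ A.PosDef ∧ matSk n k A = 1

/-- The quadratic form `½ xᵀ A x`. -/
def quadA (n : ℕ) (A : Matrix (Fin n) (Fin n) ℝ) (x : Euc n) : ℝ :=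
  (1 / 2) * ∑ i, ∑ j, x i * A i j * x j

/-- The linear form `b ⋅ x`. -/
def linB (n : ℕ) (b x : Euc n) : ℝ := ∑ i, b i * x i

/-- `λ_max(A) < c`, expressed through the quadratic form (for symmetric `A`). -/
def lambdaMaxLT (n : ℕ) (A : Matrix (Fin n) (Fin n) ℝ) (c : ℝ) : Prop :=
  ∀ x : Euc n, x ≠ 0 → ∑ i, ∑ j, x i * A i j * x j < c * ‖x‖ ^ 2

/-- `u` is smooth on an open neighbourhood of the (closed) set `S`;
this is our rendering of `u ∈ C^∞(S)` for a closed set `S`. -/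
def SmoothOnNhd (n : ℕ) (u : Euc n → ℝ) (S : Set (Euc n)) : Prop :=
  ∃ U : Set (Euc n), IsOpen U ∧ S ⊆ U ∧ ContDiffOn ℝ (⊤ : ℕ∞) u U

/-- A smooth bounded strictly convex domain in ℝⁿ. -/
def SmoothStrictConvexDomain (n : ℕ) (Ω : Set (Euc n)) : Prop :=
  IsOpen Ω ∧ Bornology.IsBounded Ω ∧ Ω.Nonempty ∧ Convex ℝ Ω ∧ StrictConvex ℝ Ω ∧
    ∃ f : Euc n → ℝ, ContDiff ℝ (⊤ : ℕ∞) f ∧ Ω = {x | f x < 0} ∧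
      ∀ x ∈ frontier Ω, fderiv ℝ f x ≠ 0

/-- Extension of `u` by the constant value `v` inside `Ω`. -/
def extBy (n : ℕ) (Ω : Set (Euc n)) (v : ℝ) (u : Euc n → ℝ) : Euc n → ℝ :=
  fun x => if x ∈ Ω then v else u x

/-- `u` (vanishing on `∂Ω`) is quasiconvex: all sublevel sets of its zero-extension are convex. -/
def QuasiconvexSol (n : ℕ) (Ω : Set (Euc n)) (u : Euc n → ℝ) : Prop :=
  ∀ t : ℝ, Convex ℝ {x : Euc n | extBy n Ω 0 u x ≤ t}

/-- The `k`-th elementary symmetric polynomial of a vector `a ∈ ℝⁿ`. -/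
def esymmVec (n k : ℕ) (a : Fin n → ℝ) : ℝ :=
  ∑ s ∈ Finset.powersetCard k (Finset.univ : Finset (Fin n)), ∏ i ∈ s, a i

/-- `h_k(a) = max_i S_{k-1}(a)|_{a_i = 0} · a_i`. -/
def hkfun (n k : ℕ) (a : Fin n → ℝ) : ℝ :=
  ⨆ i : Fin n, esymmVec n (k - 1) (Function.update a i 0) * a i

/-- The exponent `-k / (2 h_k(a))`. -/
def genExp (n k : ℕ) (a : Fin n → ℝ) : ℝ := -(k : ℝ) / (2 * hkfun n k a)

/-- The integrand `(1 + α t^{-k/(2h_k(a))})^{1/k}`. -/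
def genInt (n k : ℕ) (a : Fin n → ℝ) (α t : ℝ) : ℝ :=
  (1 + α * t ^ genExp n k a) ^ ((1 : ℝ) / (k : ℝ))

/-- The generalized symmetric function `ū`. -/
def ubar (n k : ℕ) (a : Fin n → ℝ) (R₀ α : ℝ) (x : Euc n) : ℝ :=
  ∫ t in R₀..(quadA n (Matrix.diagonal a) x), genInt n k a α t

/-- `μ(α) = ∫_{R₀}^∞ ((1 + α t^{-k/(2h_k(a))})^{1/k} - 1) dt - R₀`. -/
def muA (n k : ℕ) (a : Fin n → ℝ) (R₀ α : ℝ) : ℝ :=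
  (∫ t in Set.Ioi R₀, (genInt n k a α t - 1)) - R₀

/-- The ellipsoid `E_R(xb) = {x : ½ (x - xb)ᵀ A (x - xb) < R}`. -/
def ESet (n : ℕ) (A : Matrix (Fin n) (Fin n) ℝ) (xb : Euc n) (R : ℝ) : Set (Euc n) :=
  {x : Euc n | quadA n A (x - xb) < R}

/-- The non-concentric convex ring `Ω_R^ε = E_R(0) ∖ B̄_ε(x₀)`. -/
def OmegaRe (n : ℕ) (a : Fin n → ℝ) (x₀ : Euc n) (ε R : ℝ) : Set (Euc n) :=
  ESet n (Matrix.diagonal a) 0 R \ closure (Metric.ball x₀ ε)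

/-- `u` is a `k`-convex solution of the approximating problem
`S_k(D²u) = 1` in `Ω_R^ε`, `u = 0` on `∂B_ε(x₀)`, `u = ū` on `∂E_R(0)`. -/
def ApproxSol (n k : ℕ) (a : Fin n → ℝ) (x₀ : Euc n) (ε R R₀ α : ℝ)
    (u : Euc n → ℝ) : Prop :=
  SmoothOnNhd n u (closure (OmegaRe n a x₀ ε R)) ∧
  KConvexOn n k u (OmegaRe n a x₀ ε R) ∧
  (∀ x ∈ OmegaRe n a x₀ ε R, SkHess n k u x = 1) ∧
  (∀ x ∈ Metric.sphere x₀ ε, u x = 0) ∧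
  (∀ x : Euc n, quadA n (Matrix.diagonal a) x = R → u x = ubar n k a R₀ α x)

/-- The constant `C_ε` of the boundary gradient estimate. -/
def Ceps (n k : ℕ) (C ε : ℝ) : ℝ :=
  if 2 * k < n then C * ((n : ℝ) / (k : ℝ) - 2) * ε⁻¹
  else if 2 * k = n then C * ε⁻¹ * |Real.log ε|⁻¹
  else C * (2 - (n : ℝ) / (k : ℝ)) * ε ^ (1 - (n : ℝ) / (k : ℝ))

/-- `u` is a `k`-convex solution of the exterior Dirichlet problem
`S_k(D²u) = 1` in `ℝⁿ ∖ B̄_ε(x₀)`, `u = 0` on `∂B_ε(x₀)`, with quadratic asymptotics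
`½ xᵀAx + c` at infinity (`A = diag a`). -/
def ExtBallSol (n k : ℕ) (a : Fin n → ℝ) (x₀ : Euc n) (ε c : ℝ) (u : Euc n → ℝ) : Prop :=
  SmoothOnNhd n u (Metric.ball x₀ ε)ᶜ ∧
  KConvexOn n k u (closure (Metric.ball x₀ ε))ᶜ ∧
  (∀ x ∈ (closure (Metric.ball x₀ ε))ᶜ, SkHess n k u x = 1) ∧
  (∀ x ∈ Metric.sphere x₀ ε, u x = 0) ∧
  Tendsto (fun x : Euc n => u x - (quadA n (Matrix.diagonal a) x + c))
    (cocompact (Euc n)) (𝓝 0)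

/-- `u` is a `k`-convex solution of the exterior Dirichlet problem on `ℝⁿ ∖ Ω₀` with
asymptotics `½ xᵀAx + b·x + c` at infinity. -/
def ExtDomSol (n k : ℕ) (Ω₀ : Set (Euc n)) (A : Matrix (Fin n) (Fin n) ℝ) (b : Euc n)
    (c : ℝ) (u : Euc n → ℝ) : Prop :=
  SmoothOnNhd n u Ω₀ᶜ ∧
  KConvexOn n k u (closure Ω₀)ᶜ ∧
  (∀ x ∈ (closure Ω₀)ᶜ, SkHess n k u x = 1) ∧
  (∀ x ∈ frontier Ω₀, u x = 0) ∧
  Tendsto (fun x : Euc n => u x - (quadA n A x + linB n b x + c))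
    (cocompact (Euc n)) (𝓝 0)

/-- `u` is a solution of the exterior Dirichlet problem for the Laplace equation
`Δu = 1` on `ℝⁿ ∖ Ω₀` with asymptotics `½ xᵀAx + b·x + c` at infinity. -/
def ExtDomSolLap (n : ℕ) (Ω₀ : Set (Euc n)) (A : Matrix (Fin n) (Fin n) ℝ) (b : Euc n)
    (c : ℝ) (u : Euc n → ℝ) : Prop :=
  SmoothOnNhd n u Ω₀ᶜ ∧
  (∀ x ∈ (closure Ω₀)ᶜ, lapl n u x = 1) ∧
  (∀ x ∈ frontier Ω₀, u x = 0) ∧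
  Tendsto (fun x : Euc n => u x - (quadA n A x + linB n b x + c))
    (cocompact (Euc n)) (𝓝 0)

/-- `u` solves the exterior problem `Δu = 0` in `ℝⁿ ∖ Ω̄`, `u = 1` on `∂Ω`,
`u → 0` at infinity. -/
def HarmExtSol (n : ℕ) (Ω : Set (Euc n)) (u : Euc n → ℝ) : Prop :=
  SmoothOnNhd n u Ωᶜ ∧
  (∀ x ∈ (closure Ω)ᶜ, lapl n u x = 0) ∧
  (∀ x ∈ frontier Ω, u x = 1) ∧
  Tendsto u (cocompact (Euc n)) (𝓝 0)

end

/-!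
Suppose `ũ - q` has a local maximum at `z`, where `q` is a quadratic polynomial. Outside the closed
ball `D²q - D²u(z)` is positive semidefinite, and `S_k` is monotone on the Gårding cone, so
`S_k(D²q) ≥ S_k(D²u(z)) > 0`. In the ball and on its boundary `ũ(z) = 0`; once `ũ ≥ 0` near `z`, the
polynomial `q` has a local minimum at `z`, so `D²q` is positive semidefinite.

It remains to see that `u ≥ 0` near the sphere. Let `G' = (1 + α s^{-m})^{1/k}` with `m > 1`
slightly below the exponent of the generalized symmetric solution. Then `w₁ = |x - x₀|² - ε²` and
`w₂ = G(½ xᵀ A x)` are strict `k`-convex subsolutions, so `u - w₁` and `u - w₂` have no local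
minimum. Choosing `α` large makes `w₂` overtake `w₁` between two ellipsoids around the ball, and for
large `c` the function `u` lies above `w₂` near infinity. Comparison gives `u ≥ w₁ ≥ 0` near the
sphere.
-/

section SymmetricFunctions

open Polynomial

lemma esymm_zero_right {R : Type*} [CommSemiring R] (s : Multiset R) : s.esymm 0 = 1 := by
  simp [Multiset.esymm]

lemma esymm_cons_succ {R : Type*} [CommSemiring R] (x : R) (s : Multiset R) (j : ℕ) :
    (x ::ₘ s).esymm (j + 1) = s.esymm (j + 1) + x * s.esymm j := by
  simp [Multiset.esymm, Multiset.powersetCard_cons, Multiset.sum_map_mul_left]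

lemma esymm_nonneg {s : Multiset ℝ} (hs : ∀ x ∈ s, 0 ≤ x) (j : ℕ) : 0 ≤ s.esymm j := by
  refine Multiset.sum_nonneg fun y hy => ?_
  obtain ⟨t, ht, rfl⟩ := Multiset.mem_map.mp hy
  exact Multiset.prod_nonneg fun x hx =>
    hs x (Multiset.mem_of_le (Multiset.mem_powersetCard.mp ht).1 hx)

lemma esymm_pos {s : Multiset ℝ} (hs : ∀ x ∈ s, 0 < x) {j : ℕ} (hj : j ≤ s.card) :
    0 < s.esymm j := by
  induction s using Multiset.induction_on generalizing j with
  | empty => simp_all [esymm_zero_right]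
  | cons x s ih =>
    obtain ⟨hx, hs⟩ := Multiset.forall_mem_cons.mp hs
    cases j with
    | zero => simp [esymm_zero_right]
    | succ j =>
      rw [esymm_cons_succ]
      have hpos : 0 < s.esymm j := ih hs (by simpa using hj)
      have hnonneg : 0 ≤ s.esymm (j + 1) := esymm_nonneg (fun y hy => (hs y hy).le) _
      positivity

lemma splits_derivative {p : ℝ[X]} (hp : p.Splits) : (derivative p).Splits := by
  rw [splits_iff_card_roots] at hp ⊢
  have hrolle := card_roots_le_derivative p
  have hcard := card_roots' (derivative p)
  have hdeg := natDegree_derivative_le p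
  omega

lemma splits_iterate_derivative {p : ℝ[X]} (hp : p.Splits) (j : ℕ) :
    (derivative^[j] p).Splits := by
  induction j with
  | zero => exact hp
  | succ j ih =>
    rw [Function.iterate_succ_apply']
    exact splits_derivative ih

lemma eval_prod_mul_eval_derivative_le_sq (s : Multiset ℝ) (x : ℝ) :
    let p := (s.map fun r => X - C r).prod
    p.eval x * (derivative (derivative p)).eval x ≤ (derivative p).eval x ^ 2 := by
  induction s using Multiset.induction_on with
  | empty => simp
  | cons r s ih =>
    simp only [Multiset.map_cons, Multiset.prod_cons, derivative_mul, derivative_sub,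
      derivative_X, derivative_C, derivative_add, eval_mul, eval_add, eval_sub, eval_X, eval_C,
      sub_zero, one_mul] at ih ⊢
    set p := (s.map fun r => X - C r).prod
    nlinarith [sq_nonneg (p.eval x), mul_le_mul_of_nonneg_left ih (sq_nonneg (x - r))]

lemma laguerre_inequality {p : ℝ[X]} (hp : p.Splits) (x : ℝ) :
    p.eval x * (derivative (derivative p)).eval x ≤ (derivative p).eval x ^ 2 := by
  rw [hp.eq_prod_roots]
  simp only [derivative_C_mul, eval_mul, eval_C]
  nlinarith [mul_le_mul_of_nonneg_left (eval_prod_mul_eval_derivative_le_sq p.roots x)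
    (sq_nonneg p.leadingCoeff)]

/- Laguerre's inequality at `0` for the `j`-th derivative, whose Taylor coefficients at `0` are
`j! c_j`, `(j+1)! c_{j+1}` and `(j+2)! c_{j+2}/2`. -/
lemma newton_inequality_coeff {p : ℝ[X]} (hp : p.Splits) (j : ℕ) :
    (j + 2) * (p.coeff j * p.coeff (j + 2)) ≤ (j + 1) * p.coeff (j + 1) ^ 2 := by
  have h := laguerre_inequality (splits_iterate_derivative hp j) 0
  simp only [← Function.iterate_succ_apply' derivative, ← coeff_zero_eq_eval_zero,
    coeff_iterate_derivative, zero_add, Nat.descFactorial_self, nsmul_eq_mul,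
    Nat.succ_eq_add_one, Nat.factorial_succ] at h
  push_cast at h
  refine le_of_mul_le_mul_left ?_ (by positivity : (0 : ℝ) < (j.factorial : ℝ) ^ 2 * (j + 1))
  linarith [h]

lemma coeff_mul_coeff_le_sq {p : ℝ[X]} (hp : p.Splits) (j : ℕ) :
    p.coeff j * p.coeff (j + 2) ≤ p.coeff (j + 1) ^ 2 := by
  rcases le_or_gt (p.coeff j * p.coeff (j + 2)) 0 with h | h
  · exact h.trans (sq_nonneg _)
  · nlinarith [newton_inequality_coeff hp j, (j.cast_nonneg : (0 : ℝ) ≤ j)]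

lemma esymm_mul_esymm_le_sq (s : Multiset ℝ) (j : ℕ) :
    s.esymm j * s.esymm (j + 2) ≤ s.esymm (j + 1) ^ 2 := by
  rcases lt_or_ge s.card (j + 2) with hlt | hle
  · have : s.esymm (j + 2) = 0 := by
      simp [Multiset.esymm, Multiset.powersetCard_eq_empty _ hlt]
    rw [this, mul_zero]
    exact sq_nonneg _
  · have hsplits : ((s.map fun r => X + C r).prod).Splits :=
      Splits.multisetProd fun f hf => by
        obtain ⟨r, -, rfl⟩ := Multiset.mem_map.mp hf
        exact Splits.X_add_C r
    have h := coeff_mul_coeff_le_sq hsplits (s.card - (j + 2))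
    rw [Multiset.prod_X_add_C_coeff _ (by omega), Multiset.prod_X_add_C_coeff _ (by omega),
      Multiset.prod_X_add_C_coeff _ (by omega)] at h
    rw [show s.card - (s.card - (j + 2)) = j + 2 by omega,
      show s.card - (s.card - (j + 2) + 2) = j by omega,
      show s.card - (s.card - (j + 2) + 1) = j + 1 by omega] at h
    linarith

/- If `S_{j+1}(s) ≤ 0` while `S_j(s) > 0`, positivity of `S_{j+1}` and `S_{j+2}` of `x ::ₘ s` forces
`x > 0` and then `S_j(s) S_{j+2}(s) > S_{j+1}(s)²`, against Newton's inequality. -/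
lemma esymm_pos_of_cons {x : ℝ} {s : Multiset ℝ} {k : ℕ}
    (h : ∀ j, 1 ≤ j → j ≤ k → 0 < (x ::ₘ s).esymm j) {j : ℕ} (hj : j < k) : 0 < s.esymm j := by
  induction j with
  | zero => simp [esymm_zero_right]
  | succ j ih =>
    have h₀ : 0 < s.esymm j := ih (by omega)
    have h₁ := h (j + 1) (by omega) (by omega)
    have h₂ := h (j + 2) (by omega) (by omega)
    rw [esymm_cons_succ] at h₁ h₂
    by_contra! hneg
    have hx : 0 < x := by
      by_contra! hx
      nlinarith
    nlinarith [mul_pos h₀ h₂, hx, esymm_mul_esymm_le_sq s j]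

/-- `S_j` of the subfamily of `a` indexed by `s`. Taking `s = univ.erase i` gives the paper's
`S_j(a)|_{a_i = 0}`. -/
def esymmOn {ι : Type*} (a : ι → ℝ) (s : Finset ι) (j : ℕ) : ℝ := (s.val.map a).esymm j

section

variable {ι : Type*} (a : ι → ℝ) (s : Finset ι) (j : ℕ)

lemma esymmOn_zero : esymmOn a s 0 = 1 := esymm_zero_right _

lemma esymmOn_const_mul (c : ℝ) :
    esymmOn (fun i => c * a i) s j = c ^ j * esymmOn a s j := by
  simp only [esymmOn, Finset.esymm_map_val, Finset.mul_sum]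
  refine Finset.sum_congr rfl fun t ht => ?_
  rw [Finset.prod_mul_distrib, Finset.prod_const, (Finset.mem_powersetCard.mp ht).2]

lemma esymmOn_const (c : ℝ) : esymmOn (fun _ => c) s j = s.card.choose j * c ^ j := by
  simp only [esymmOn, Finset.esymm_map_val]
  rw [Finset.sum_congr rfl fun t ht => by
    rw [Finset.prod_const, (Finset.mem_powersetCard.mp ht).2]]
  simp

variable {a s j}

lemma esymmOn_nonneg (ha : ∀ i, 0 ≤ a i) : 0 ≤ esymmOn a s j :=
  esymm_nonneg (by simpa using fun i _ => ha i) j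

lemma esymmOn_pos (ha : ∀ i, 0 < a i) (hj : j ≤ s.card) : 0 < esymmOn a s j :=
  esymm_pos (by simpa using fun i _ => ha i) (by simpa using hj)

variable [DecidableEq ι] {i : ι}

lemma cons_map_erase (hi : i ∈ s) : a i ::ₘ (s.erase i).val.map a = s.val.map a := by
  rw [← Multiset.map_cons, Finset.erase_val, Multiset.cons_erase hi]

lemma esymmOn_succ (hi : i ∈ s) :
    esymmOn a s (j + 1) = esymmOn a (s.erase i) (j + 1) + a i * esymmOn a (s.erase i) j := by
  rw [esymmOn, ← cons_map_erase hi, esymm_cons_succ]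
  rfl

lemma esymmOn_erase_pos {k : ℕ} (h : ∀ j, 1 ≤ j → j ≤ k → 0 < esymmOn a s j) (hi : i ∈ s)
    (hj : j < k) : 0 < esymmOn a (s.erase i) j := by
  refine esymm_pos_of_cons (x := a i) (k := k) ?_ hj
  rwa [cons_map_erase hi]

end

end SymmetricFunctions

section Hessians

open Polynomial Matrix

lemma det_diagonal_add_vecMulVec {K ι : Type*} [Field K] [Fintype ι] [DecidableEq ι]
    {d : ι → K} (hd : ∀ i, d i ≠ 0) (u v : ι → K) :
    (diagonal d + vecMulVec u v).det
      = ∏ i, d i + ∑ i, u i * v i * ∏ j ∈ Finset.univ.erase i, d j := by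
  have hfactor : diagonal d + vecMulVec u v = diagonal d * (1 + vecMulVec (d⁻¹ * u) v) := by
    rw [mul_add, mul_one, mul_vecMulVec]
    congr 2
    ext i
    simp [mulVec_diagonal, hd i]
  rw [hfactor, det_mul, det_diagonal, vecMulVec_eq Unit,
    det_one_add_replicateCol_mul_replicateRow, mul_add, mul_one, dotProduct, Finset.mul_sum]
  congr 1
  refine Finset.sum_congr rfl fun i hi => ?_
  rw [← Finset.mul_prod_erase _ d hi]
  simp only [Pi.mul_apply, Pi.inv_apply]
  field_simp [hd i]

/- Both sides agree at every `t` outside the finite set of the `l i`. -/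
lemma charpoly_diagonal_add_smul_vecMulVec {ι : Type*} [Fintype ι] [DecidableEq ι]
    (l v : ι → ℝ) (τ : ℝ) :
    (diagonal l + τ • vecMulVec v v).charpoly
      = ∏ i, (X - C (l i)) - ∑ i, C (τ * v i ^ 2) * ∏ j ∈ Finset.univ.erase i, (X - C (l j)) := by
  refine eq_of_infinite_eval_eq _ _ ((Set.finite_range l).infinite_compl.mono fun t ht => ?_)
  have hne : ∀ i, t - l i ≠ 0 := fun i h => ht ⟨i, by linarith⟩
  have hmatrix : scalar ι t - (diagonal l + τ • vecMulVec v v)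
      = diagonal (fun i => t - l i) + vecMulVec (fun i => -τ * v i) v := by
    ext i j
    by_cases hij : i = j
    · subst hij
      simp [vecMulVec_apply]
      ring
    · simp [vecMulVec_apply, hij]
      ring
  rw [Set.mem_ofPred_eq, eval_charpoly, hmatrix, det_diagonal_add_vecMulVec hne]
  simp only [eval_sub, eval_prod, eval_finsetSum, eval_mul, eval_X, eval_C]
  rw [sub_eq_add_neg, ← Finset.sum_neg_distrib]
  congr 1
  exact Finset.sum_congr rfl fun i _ => by ring

lemma coeff_prod_X_sub_C {ι : Type*} (l : ι → ℝ) (s : Finset ι) {j : ℕ} (hj : j ≤ s.card) :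
    (∏ i ∈ s, (X - C (l i))).coeff (s.card - j) = (-1) ^ j * esymmOn l s j := by
  have h := Multiset.prod_X_sub_C_coeff (s.val.map l) (k := s.card - j) (by simp)
  rwa [Multiset.map_map, Multiset.card_map, Finset.card_val, Nat.sub_sub_self hj] at h

variable {n k : ℕ}

lemma matSk_diagonal_add_smul_vecMulVec (l v : Fin n → ℝ) (τ : ℝ) {j : ℕ} (hj : j < n) :
    matSk n (j + 1) (diagonal l + τ • vecMulVec v v)
      = esymmOn l Finset.univ (j + 1)
        + τ * ∑ i, v i ^ 2 * esymmOn l (Finset.univ.erase i) j := by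
  have hcoeff : ∀ i, (∏ m ∈ Finset.univ.erase i, (X - C (l m))).coeff (n - (j + 1))
      = (-1) ^ j * esymmOn l (Finset.univ.erase i) j := fun i => by
    have hcard : (Finset.univ.erase i).card = n - 1 := by simp
    rw [← coeff_prod_X_sub_C l _ (by omega), hcard, Nat.sub_sub, add_comm 1 j]
  have huniv := coeff_prod_X_sub_C l Finset.univ (j := j + 1) (by simpa using hj)
  rw [Finset.card_fin] at huniv
  rw [matSk, charpoly_diagonal_add_smul_vecMulVec, coeff_sub, huniv, finsetSum_coeff]
  simp only [coeff_C_mul, hcoeff]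
  have hsign : ((-1 : ℝ) ^ j) ^ 2 = 1 := by rw [← pow_mul, mul_comm, pow_mul]; simp
  rw [mul_sub, Finset.mul_sum, Finset.mul_sum, sub_eq_add_neg, ← Finset.sum_neg_distrib]
  congr 1
  · linear_combination (esymmOn l Finset.univ (j + 1)) * hsign
  · refine Finset.sum_congr rfl fun i _ => ?_
    linear_combination (τ * v i ^ 2 * esymmOn l (Finset.univ.erase i) j) * hsign

lemma matSk_eq_esymmOn {M : Matrix (Fin n) (Fin n) ℝ} {l : Fin n → ℝ}
    (hM : M.charpoly = ∏ i, (X - C (l i))) {j : ℕ} (hj : j ≤ n) :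
    matSk n j M = esymmOn l Finset.univ j := by
  have hcoeff := coeff_prod_X_sub_C l Finset.univ (j := j) (by simpa using hj)
  rw [Finset.card_fin] at hcoeff
  rw [matSk, hM, hcoeff, ← mul_assoc, ← mul_pow, neg_one_mul, neg_neg, one_pow, one_mul]

lemma matSk_diagonal (l : Fin n → ℝ) {j : ℕ} (hj : j ≤ n) :
    matSk n j (diagonal l) = esymmOn l Finset.univ j :=
  matSk_eq_esymmOn (charpoly_diagonal l) hj

lemma matSk_nonneg_of_posSemidef {M : Matrix (Fin n) (Fin n) ℝ} (hM : M.PosSemidef) {j : ℕ}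
    (hj : j ≤ n) : 0 ≤ matSk n j M := by
  rw [matSk_eq_esymmOn hM.1.charpoly_eq hj]
  exact esymmOn_nonneg hM.eigenvalues_nonneg

lemma exists_orthogonal_diagonalization {W : Matrix (Fin n) (Fin n) ℝ} (hW : W.IsSymm) :
    ∃ (Q : Matrix (Fin n) (Fin n) ℝ) (l : Fin n → ℝ),
      Q * Qᵀ = 1 ∧ Qᵀ * Q = 1 ∧ W = Q * diagonal l * Qᵀ := by
  have hherm : W.IsHermitian := by
    rwa [IsHermitian, conjTranspose_eq_transpose_of_trivial]
  have hspec := hherm.spectral_theorem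
  rw [Unitary.conjStarAlgAut_apply] at hspec
  exact ⟨hherm.eigenvectorUnitary, hherm.eigenvalues,
    mem_unitaryGroup_iff.mp hherm.eigenvectorUnitary.2,
    mem_unitaryGroup_iff'.mp hherm.eigenvectorUnitary.2, hspec⟩

lemma matSk_conj {Q : Matrix (Fin n) (Fin n) ℝ} (hQ : Qᵀ * Q = 1)
    (D : Matrix (Fin n) (Fin n) ℝ) (j : ℕ) : matSk n j (Q * D * Qᵀ) = matSk n j D := by
  rw [matSk, charpoly_mul_comm, ← Matrix.mul_assoc, hQ, one_mul, matSk]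

/-- The eigenvalues of `M` lie in the Gårding cone `Γ_k`, so that `KConvexOn n k u U` says
`∀ x ∈ U, InGardingCone k (hessMat n u x)`. -/
def InGardingCone (k : ℕ) (M : Matrix (Fin n) (Fin n) ℝ) : Prop :=
  ∀ j, 1 ≤ j → j ≤ k → 0 < matSk n j M

lemma matSk_le_add_vecMulVec (hkn : k ≤ n) {W : Matrix (Fin n) (Fin n) ℝ} (hW : W.IsSymm)
    (hcone : InGardingCone k W) (v : Fin n → ℝ) {j : ℕ} (hj₁ : 1 ≤ j)
    (hj : j ≤ k) :
    matSk n j W ≤ matSk n j (W + vecMulVec v v) := by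
  obtain ⟨Q, l, hQ, hQ', rfl⟩ := exists_orthogonal_diagonalization hW
  set w := Qᵀ *ᵥ v
  have hv : vecMulVec v v = Q * vecMulVec w w * Qᵀ := by
    rw [mul_vecMulVec, vecMulVec_mul, vecMul_transpose, mulVec_mulVec, hQ, one_mulVec]
  have hpos : ∀ i, 1 ≤ i → i ≤ k → 0 < esymmOn l Finset.univ i := fun i hi hik => by
    simpa only [matSk_conj hQ', matSk_diagonal l (hik.trans hkn)] using hcone i hi hik
  rw [hv, ← Matrix.add_mul, ← Matrix.mul_add, matSk_conj hQ', matSk_conj hQ']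
  obtain ⟨j, rfl⟩ := Nat.exists_eq_add_of_le' hj₁
  rw [matSk_diagonal l (hj.trans hkn), ← one_smul ℝ (vecMulVec w w),
    matSk_diagonal_add_smul_vecMulVec l w 1 (by omega), one_mul]
  exact le_add_of_nonneg_right <| Finset.sum_nonneg fun i _ =>
    mul_nonneg (sq_nonneg _) (esymmOn_erase_pos hpos (Finset.mem_univ i) hj).le

lemma matSk_le_add_posSemidef (hkn : k ≤ n) {W P : Matrix (Fin n) (Fin n) ℝ} (hW : W.IsSymm)
    (hcone : InGardingCone k W) (hP : P.PosSemidef) {j : ℕ} (hj₁ : 1 ≤ j) (hj : j ≤ k) :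
    matSk n j W ≤ matSk n j (W + P) := by
  obtain ⟨m, v, rfl⟩ := posSemidef_iff_eq_sum_vecMulVec.mp hP
  suffices h : ∀ s : Finset (Fin m), (W + ∑ i ∈ s, vecMulVec (v i) (v i)).IsSymm ∧
      ∀ j, 1 ≤ j → j ≤ k → matSk n j W ≤ matSk n j (W + ∑ i ∈ s, vecMulVec (v i) (v i)) by
    simpa using (h Finset.univ).2 j hj₁ hj
  intro s
  induction s using Finset.induction_on with
  | empty => simpa using hW
  | insert i s hi ih =>
    obtain ⟨hsymm, hle⟩ := ih
    rw [Finset.sum_insert hi, add_comm (vecMulVec _ _), ← add_assoc]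
    refine ⟨hsymm.add (transpose_vecMulVec _ _), fun j hj₁ hj => (hle j hj₁ hj).trans ?_⟩
    exact matSk_le_add_vecMulVec hkn hsymm
      (fun i hi₁ hi => (hcone i hi₁ hi).trans_le (hle i hi₁ hi)) (v i) hj₁ hj

end Hessians

section SecondOrderTouching

open Matrix

lemma second_deriv_nonneg_of_isLocalMin {φ φ' : ℝ → ℝ} {b : ℝ}
    (hφ : ∀ᶠ t in 𝓝 0, HasDerivAt φ (φ' t) t) (hφ' : HasDerivAt φ' b 0)
    (hmin : IsLocalMin φ 0) : 0 ≤ b := by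
  by_contra! hb
  have hderiv : deriv φ =ᶠ[𝓝 0] φ' := hφ.mono fun t ht => ht.deriv
  have hderiv₂ : deriv (deriv φ) 0 = b := by rw [hderiv.deriv_eq, hφ'.deriv]
  have hmax : IsLocalMax φ 0 := isLocalMax_of_deriv_deriv_neg (hderiv₂ ▸ hb) hmin.deriv_eq_zero
    hφ.self_of_nhds.continuousAt
  have hconst : φ =ᶠ[𝓝 0] fun _ => φ 0 := by
    filter_upwards [hmin, hmax] with t hge hle using le_antisymm hle hge
  have hzero : deriv φ =ᶠ[𝓝 0] fun _ => 0 := by simpa using hconst.deriv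
  rw [← hderiv₂, hzero.deriv_eq, deriv_const] at hb
  exact hb.false

variable {n : ℕ}

/-- `f` is twice differentiable at `z` along every line through `z`, with second derivative
`vᵀ W v` in the direction `v`. This is all of `D²f(z) = W` that second-order touching arguments
use, and it is easy to verify for explicit comparison functions. -/
def HasLineHessAt (f : Euc n → ℝ) (W : Matrix (Fin n) (Fin n) ℝ) (z : Euc n) : Prop :=
  ∀ v : Euc n, ∃ φ' : ℝ → ℝ,
    (∀ᶠ t in 𝓝 (0 : ℝ), HasDerivAt (fun t : ℝ => f (z + t • v)) (φ' t) t) ∧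
      HasDerivAt φ' (v.ofLp ⬝ᵥ W *ᵥ v.ofLp) 0

lemma tendsto_add_smul_zero (z v : Euc n) : Tendsto (fun t : ℝ => z + t • v) (𝓝 0) (𝓝 z) := by
  have hcont : Continuous fun t : ℝ => z + t • v := by fun_prop
  simpa using hcont.tendsto 0

lemma HasLineHessAt.sub {f g : Euc n → ℝ} {V W : Matrix (Fin n) (Fin n) ℝ} {z : Euc n}
    (hf : HasLineHessAt f V z) (hg : HasLineHessAt g W z) :
    HasLineHessAt (fun x => f x - g x) (V - W) z := by
  intro v
  obtain ⟨φ', hφ, hφ'⟩ := hf v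
  obtain ⟨ψ', hψ, hψ'⟩ := hg v
  refine ⟨fun t => φ' t - ψ' t, ?_, ?_⟩
  · filter_upwards [hφ, hψ] with t htφ htψ using htφ.sub htψ
  · rw [sub_mulVec, dotProduct_sub]
    exact hφ'.sub hψ'

lemma HasLineHessAt.posSemidef_of_isLocalMin {f : Euc n → ℝ} {W : Matrix (Fin n) (Fin n) ℝ}
    {z : Euc n} (hf : HasLineHessAt f W z) (hW : W.IsSymm) (hmin : IsLocalMin f z) :
    W.PosSemidef := by
  refine posSemidef_iff_dotProduct_mulVec.mpr
    ⟨by rwa [IsHermitian, conjTranspose_eq_transpose_of_trivial], fun v => ?_⟩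
  obtain ⟨φ', hφ, hφ'⟩ := hf (WithLp.toLp 2 v)
  refine second_deriv_nonneg_of_isLocalMin hφ hφ' ?_
  filter_upwards [(tendsto_add_smul_zero z (WithLp.toLp 2 v)).eventually hmin] with t ht
  simpa using ht

lemma hessMat_isSymm {u : Euc n → ℝ} {z : Euc n} (hu : ContDiffAt ℝ 2 u z) :
    (hessMat n u z).IsSymm := by
  ext i j
  simp only [transpose_apply, hessMat, of_apply, iteratedFDeriv_two_apply]
  exact hu.isSymmSndFDerivAt (by simp) _ _

lemma dotProduct_hessMat_mulVec (u : Euc n → ℝ) (z v w : Euc n) :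
    v.ofLp ⬝ᵥ hessMat n u z *ᵥ w.ofLp = fderiv ℝ (fderiv ℝ u) z v w := by
  have hbasis : ∀ x : Euc n, x = ∑ i, x i • ebasis n i := fun x => by
    ext j
    simp [ebasis, Pi.single_apply]
  conv_rhs => rw [hbasis v, hbasis w]
  simp only [dotProduct, mulVec, hessMat, of_apply, iteratedFDeriv_two_apply, map_sum, map_smul,
    _root_.sum_apply, _root_.smul_apply, smul_eq_mul, Matrix.cons_val_zero, Matrix.cons_val_one,
    Finset.mul_sum]
  rw [Finset.sum_comm]
  exact Finset.sum_congr rfl fun i _ => Finset.sum_congr rfl fun j _ => by ring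

lemma hasLineHessAt_hessMat {u : Euc n → ℝ} {z : Euc n} (hu : ContDiffAt ℝ 2 u z) :
    HasLineHessAt u (hessMat n u z) z := by
  intro v
  have hline : ∀ t : ℝ, HasDerivAt (fun t : ℝ => z + t • v) v t := fun t => by
    simpa using ((hasDerivAt_id t).smul_const v).const_add z
  refine ⟨fun t => fderiv ℝ u (z + t • v) v, ?_, ?_⟩
  · have hdiff : ∀ᶠ x in 𝓝 z, DifferentiableAt ℝ u x :=
      (hu.eventually (by simp)).mono fun x hx => hx.differentiableAt (by simp)
    filter_upwards [(tendsto_add_smul_zero z v).eventually hdiff] with t ht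
    exact ht.hasFDerivAt.comp_hasDerivAt t (hline t)
  · have hfderiv : HasFDerivAt (fderiv ℝ u) (fderiv ℝ (fderiv ℝ u) z) (z + (0 : ℝ) • v) := by
      simpa using ((hu.fderiv_right (m := 1) (by norm_num)).differentiableAt
        (by simp)).hasFDerivAt
    rw [dotProduct_hessMat_mulVec]
    exact (ContinuousLinearMap.apply ℝ ℝ v).hasFDerivAt.comp_hasDerivAt (0 : ℝ)
      (hfderiv.comp_hasDerivAt (0 : ℝ) (hline 0))

variable {M : Matrix (Fin n) (Fin n) ℝ}

lemma quadA_eq_dotProduct (M : Matrix (Fin n) (Fin n) ℝ) (x : Euc n) :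
    quadA n M x = 1 / 2 * (x.ofLp ⬝ᵥ M *ᵥ x.ofLp) := by
  simp only [quadA, dotProduct, mulVec, Finset.mul_sum, mul_assoc]

lemma hasDerivAt_dotProduct_mulVec_add_smul (M : Matrix (Fin n) (Fin n) ℝ) (z v : Euc n)
    (t : ℝ) : HasDerivAt (fun t : ℝ => v.ofLp ⬝ᵥ M *ᵥ (z + t • v).ofLp)
      (v.ofLp ⬝ᵥ M *ᵥ v.ofLp) t := by
  simp only [WithLp.ofLp_add, WithLp.ofLp_smul, mulVec_add, mulVec_smul, dotProduct_add,
    dotProduct_smul, smul_eq_mul]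
  exact (hasDerivAt_mul_const _).const_add _

lemma hasDerivAt_quadA_add_smul (hM : M.IsSymm) (z v : Euc n) (t : ℝ) :
    HasDerivAt (fun t : ℝ => quadA n M (z + t • v)) (v.ofLp ⬝ᵥ M *ᵥ (z + t • v).ofLp) t := by
  have hcomm : z.ofLp ⬝ᵥ M *ᵥ v.ofLp = v.ofLp ⬝ᵥ M *ᵥ z.ofLp := by
    rw [dotProduct_comm, dotProduct_mulVec, ← mulVec_transpose, hM.eq]
  have hexpand : ∀ t : ℝ, quadA n M (z + t • v)
      = quadA n M z + (t * (v.ofLp ⬝ᵥ M *ᵥ z.ofLp) + t ^ 2 * quadA n M v) := fun t => by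
    simp only [quadA_eq_dotProduct, WithLp.ofLp_add, WithLp.ofLp_smul, mulVec_add, mulVec_smul,
      dotProduct_add, add_dotProduct, dotProduct_smul, smul_dotProduct, smul_eq_mul, hcomm]
    ring
  simp only [hexpand]
  convert! ((hasDerivAt_mul_const _).add ((hasDerivAt_pow 2 t).mul_const _)).const_add _ using 1
  simp only [quadA_eq_dotProduct, WithLp.ofLp_add, WithLp.ofLp_smul, mulVec_add, mulVec_smul,
    dotProduct_add, dotProduct_smul, smul_eq_mul]
  ring

lemma hasLineHessAt_quadratic (hM : M.IsSymm) (p : Euc n) (r : ℝ) (z : Euc n) :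
    HasLineHessAt (fun x => quadA n M x + linB n p x + r) M z := by
  intro v
  have hlin : ∀ t : ℝ, HasDerivAt (fun t : ℝ => linB n p (z + t • v)) (linB n p v) t := fun t => by
    have hexpand : ∀ t : ℝ, linB n p (z + t • v) = linB n p z + t * linB n p v := fun t => by
      simp only [linB, PiLp.add_apply, PiLp.smul_apply, smul_eq_mul, mul_add,
        Finset.sum_add_distrib, Finset.mul_sum, mul_left_comm t]
    simpa only [hexpand] using (hasDerivAt_mul_const (linB n p v)).const_add (linB n p z)
  exact ⟨fun t => v.ofLp ⬝ᵥ M *ᵥ (z + t • v).ofLp + linB n p v,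
    Eventually.of_forall fun t => ((hasDerivAt_quadA_add_smul hM z v t).add (hlin t)).add_const r,
    (hasDerivAt_dotProduct_mulVec_add_smul M z v 0).add_const _⟩

lemma hasLineHessAt_comp_quadA (hM : M.IsSymm) {G g : ℝ → ℝ} {g' : ℝ} {z : Euc n}
    (hG : ∀ᶠ s in 𝓝 (quadA n M z), HasDerivAt G (g s) s)
    (hg : HasDerivAt g g' (quadA n M z)) :
    HasLineHessAt (fun x => G (quadA n M x))
      (g (quadA n M z) • M + g' • vecMulVec (M *ᵥ z.ofLp) (M *ᵥ z.ofLp)) z := by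
  intro v
  refine ⟨fun t => g (quadA n M (z + t • v)) * (v.ofLp ⬝ᵥ M *ᵥ (z + t • v).ofLp), ?_, ?_⟩
  · have hcont : Tendsto (fun t : ℝ => quadA n M (z + t • v)) (𝓝 0) (𝓝 (quadA n M z)) := by
      simpa using (hasDerivAt_quadA_add_smul hM z v 0).continuousAt.tendsto
    filter_upwards [hcont.eventually hG] with t ht
    exact ht.comp t (hasDerivAt_quadA_add_smul hM z v t)
  · have hg₀ : HasDerivAt g g' (quadA n M (z + (0 : ℝ) • v)) := by simpa using hg
    convert! (hg₀.comp (0 : ℝ) (hasDerivAt_quadA_add_smul hM z v 0)).mul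
      (hasDerivAt_dotProduct_mulVec_add_smul M z v 0) using 1
    simp only [Function.comp_apply, zero_smul, add_zero, add_mulVec, smul_mulVec, vecMulVec_mulVec,
      dotProduct_add, dotProduct_smul, smul_eq_mul, op_smul_eq_smul,
      dotProduct_comm (M *ᵥ z.ofLp) v.ofLp]
    ring

end SecondOrderTouching

section StrictSubsolutions

open Matrix

variable {n k : ℕ}

/-- `w` is, in the sense of `HasLineHessAt`, a strict `k`-convex subsolution of `S_k(D²w) = 1`
at `z`. -/
def IsStrictSubsolutionAt (k : ℕ) (w : Euc n → ℝ) (z : Euc n) : Prop :=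
  ∃ W : Matrix (Fin n) (Fin n) ℝ,
    W.IsSymm ∧ HasLineHessAt w W z ∧ InGardingCone k W ∧ 1 < matSk n k W

lemma IsStrictSubsolutionAt.not_isLocalMin_sub {u w : Euc n → ℝ} {z : Euc n} (hk1 : 1 ≤ k)
    (hkn : k ≤ n) (hw : IsStrictSubsolutionAt k w z) (hu : ContDiffAt ℝ 2 u z)
    (hSk : SkHess n k u z = 1) : ¬ IsLocalMin (fun x => u x - w x) z := by
  intro hmin
  obtain ⟨W, hsymm, hhess, hcone, hgt⟩ := hw
  have hpsd := ((hasLineHessAt_hessMat hu).sub hhess).posSemidef_of_isLocalMin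
    ((hessMat_isSymm hu).sub hsymm) hmin
  have hle := matSk_le_add_posSemidef hkn hsymm hcone hpsd hk1 le_rfl
  rw [add_sub_cancel] at hle
  exact (hgt.trans_le hle).ne' hSk

lemma norm_sub_sq_sub_sq_eq_quadratic (x₀ x : Euc n) (ε : ℝ) :
    ‖x - x₀‖ ^ 2 - ε ^ 2
      = quadA n (diagonal fun _ => 2) x + linB n (-(2 : ℝ) • x₀) x + (‖x₀‖ ^ 2 - ε ^ 2) := by
  simp only [EuclideanSpace.norm_sq_eq, Real.norm_eq_abs, sq_abs, quadA_eq_dotProduct,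
    dotProduct, mulVec_diagonal, linB, PiLp.sub_apply, PiLp.smul_apply, smul_eq_mul,
    Finset.mul_sum, add_sub_assoc', sub_left_inj, ← Finset.sum_add_distrib]
  exact Finset.sum_congr rfl fun i _ => by ring

lemma isStrictSubsolutionAt_norm_sub_sq (hk1 : 1 ≤ k) (hkn : k ≤ n) (x₀ z : Euc n) (ε : ℝ) :
    IsStrictSubsolutionAt k (fun x => ‖x - x₀‖ ^ 2 - ε ^ 2) z := by
  have hgt : ∀ j, 1 ≤ j → j ≤ k → 1 < matSk n j (diagonal fun _ => 2) := fun j hj₁ hj => by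
    rw [matSk_diagonal _ (hj.trans hkn), esymmOn_const, Finset.card_fin]
    have hchoose : (1 : ℝ) ≤ n.choose j := by exact_mod_cast Nat.choose_pos (hj.trans hkn)
    exact one_lt_mul_of_le_of_lt hchoose (one_lt_pow₀ one_lt_two (by omega))
  refine ⟨_, isSymm_diagonal _, ?_, fun j hj₁ hj => one_pos.trans (hgt j hj₁ hj), hgt k hk1 le_rfl⟩
  simp only [norm_sub_sq_sub_sq_eq_quadratic]
  exact hasLineHessAt_quadratic (isSymm_diagonal _) _ _ z

lemma quadA_diagonal (a : Fin n → ℝ) (x : Euc n) :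
    quadA n (diagonal a) x = (∑ i, a i * x i ^ 2) / 2 := by
  simp only [quadA_eq_dotProduct, dotProduct, mulVec_diagonal]
  rw [one_div, ← div_eq_inv_mul]
  congr 1
  exact Finset.sum_congr rfl fun i _ => by ring

lemma two_mul_mul_esymmOn_erase_lt (hn : 3 ≤ n) (hkn : k ≤ n) {a : Fin n → ℝ}
    (ha : ∀ i, 0 < a i) (hSk : esymmOn a Finset.univ k = 1) (hhalf : k = 1 → ∀ i, a i < 1 / 2)
    (i : Fin n) {j : ℕ} (hj : j < k) :
    2 * (a i * esymmOn a (Finset.univ.erase i) j) < k * esymmOn a Finset.univ (j + 1) := by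
  have hcard : (Finset.univ.erase i).card = n - 1 := by simp
  have hpos : 0 < a i * esymmOn a (Finset.univ.erase i) j :=
    mul_pos (ha i) (esymmOn_pos ha (by omega))
  have hnonneg : 0 ≤ esymmOn a (Finset.univ.erase i) (j + 1) := esymmOn_nonneg fun i => (ha i).le
  obtain rfl | rfl | hk : k = 1 ∨ k = 2 ∨ 3 ≤ k := by omega
  · obtain rfl : j = 0 := by omega
    rw [zero_add, hSk, esymmOn_zero, Nat.cast_one]
    linarith [hhalf rfl i]
  · have hpos' : 0 < esymmOn a (Finset.univ.erase i) (j + 1) := esymmOn_pos ha (by omega)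
    rw [esymmOn_succ (Finset.mem_univ i)]
    push_cast
    linarith
  · have hk' : (3 : ℝ) ≤ k := by exact_mod_cast hk
    rw [esymmOn_succ (Finset.mem_univ i)]
    nlinarith

lemma exists_one_lt_mul_esymmOn_erase_lt {a : Fin n → ℝ}
    (h : ∀ i, ∀ j < k,
      2 * (a i * esymmOn a (Finset.univ.erase i) j) < k * esymmOn a Finset.univ (j + 1)) :
    ∃ m : ℝ, 1 < m ∧ ∀ i, ∀ j < k,
      m * (2 * (a i * esymmOn a (Finset.univ.erase i) j))
        < k * esymmOn a Finset.univ (j + 1) := by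
  have hnear : ∀ᶠ m in 𝓝[>] (1 : ℝ), ∀ (i : Fin n) (j : Fin k),
      m * (2 * (a i * esymmOn a (Finset.univ.erase i) j))
        < k * esymmOn a Finset.univ (j + 1) := by
    refine Eventually.filter_mono nhdsWithin_le_nhds ?_
    simp only [Filter.eventually_all]
    intro i j
    refine (continuous_mul_const _).continuousAt.eventually_lt continuousAt_const ?_
    simpa only [one_mul] using h i j j.2
  obtain ⟨m, hm, hm₁⟩ := (hnear.and self_mem_nhdsWithin).exists
  exact ⟨m, hm₁, fun i j hj => hm i ⟨j, hj⟩⟩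

lemma mul_sum_sq_mul_esymmOn_erase_lt {a : Fin n → ℝ} (ha : ∀ i, 0 < a i) {m : ℝ} {j : ℕ}
    (hm : ∀ i, m * (2 * (a i * esymmOn a (Finset.univ.erase i) j))
      < k * esymmOn a Finset.univ (j + 1)) {x : Euc n} (hx : x ≠ 0) :
    m * ∑ i, (a i * x i) ^ 2 * esymmOn a (Finset.univ.erase i) j
      < k * esymmOn a Finset.univ (j + 1) * quadA n (diagonal a) x := by
  obtain ⟨i₀, hi₀⟩ : ∃ i, x i ≠ 0 := by
    by_contra! h
    exact hx (PiLp.ext h)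
  rw [quadA_diagonal, mul_div_assoc', Finset.mul_sum, Finset.mul_sum, Finset.sum_div]
  have hterm : ∀ i, m * ((a i * x i) ^ 2 * esymmOn a (Finset.univ.erase i) j)
      = m * (2 * (a i * esymmOn a (Finset.univ.erase i) j)) * (a i * x i ^ 2) / 2 := fun i => by
    ring
  simp only [hterm]
  refine Finset.sum_lt_sum (fun i _ => ?_) ⟨i₀, Finset.mem_univ _, ?_⟩
  · have := mul_nonneg (ha i).le (sq_nonneg (x i))
    gcongr ?_ * _ / _
    exact (hm i).le
  · have := mul_pos (ha i₀) (sq_pos_of_ne_zero hi₀)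
    gcongr ?_ * _ / _
    exact hm i₀

/- The matrix is `D²(G ∘ q)(x)` for `q = ½ xᵀ diag(a) x`, `f = G'(s)`, at `s = q(x)`, when
`G' = (1 + α s^{-m})^{1/k}` and `β = α s^{-m}`. -/
lemma lt_matSk_smul_diagonal_add_smul_vecMulVec {a : Fin n → ℝ} (ha : ∀ i, 0 < a i) {m : ℝ}
    {j : ℕ} (hj : j < k) (hkn : k ≤ n)
    (hm : ∀ i, m * (2 * (a i * esymmOn a (Finset.univ.erase i) j))
      < k * esymmOn a Finset.univ (j + 1))
    {x : Euc n} (hx : 0 < quadA n (diagonal a) x) {f β : ℝ} (hf : 0 < f) (hβ : 0 < β) :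
    f ^ (j + 1) * esymmOn a Finset.univ (j + 1) / (1 + β)
      < matSk n (j + 1) (f • diagonal a
        + (-(m * β / (k * quadA n (diagonal a) x * (1 + β))) * f) •
          vecMulVec (diagonal a *ᵥ x.ofLp) (diagonal a *ᵥ x.ofLp)) := by
  have hx₀ : x ≠ 0 := by
    rintro rfl
    simp [quadA] at hx
  have hslack := mul_sum_sq_mul_esymmOn_erase_lt ha hm hx₀
  set s := quadA n (diagonal a) x
  set E := esymmOn a Finset.univ (j + 1)
  set σ := ∑ i, (a i * x i) ^ 2 * esymmOn a (Finset.univ.erase i) j with hσ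
  have hk : (0 : ℝ) < k := by exact_mod_cast (by omega : 0 < k)
  have hSj : matSk n (j + 1) (f • diagonal a + (-(m * β / (k * s * (1 + β))) * f) •
        vecMulVec (diagonal a *ᵥ x.ofLp) (diagonal a *ᵥ x.ofLp))
      = f ^ (j + 1) * (E - β / (k * s * (1 + β)) * (m * σ)) := by
    rw [← diagonal_smul, matSk_diagonal_add_smul_vecMulVec _ _ _ (by omega)]
    simp only [Pi.smul_def, smul_eq_mul, esymmOn_const_mul, mulVec_diagonal,
      mul_left_comm _ (f ^ j), ← Finset.mul_sum, ← hσ]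
    ring
  calc f ^ (j + 1) * E / (1 + β) = f ^ (j + 1) * (E - β / (k * s * (1 + β)) * (k * E * s)) := by
        field_simp
        ring
    _ < f ^ (j + 1) * (E - β / (k * s * (1 + β)) * (m * σ)) := by gcongr
    _ = _ := hSj.symm

end StrictSubsolutions

section Barrier

variable {k : ℕ} {m α : ℝ}

/-- Slope of the radial-type barrier: the solution `f` of `f^k = 1 + α s^{-m}`. With
`m = k / (2 h_k(a))` this is the integrand of the paper's generalized symmetric function `ū`; a
smaller `m > 1` makes the subsolution strict. -/
noncomputable def barrierSlope (k : ℕ) (m α s : ℝ) : ℝ := (1 + α * s ^ (-m)) ^ (1 / (k : ℝ))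

lemma barrierSlope_pos (hα : 0 < α) {s : ℝ} (hs : 0 < s) : 0 < barrierSlope k m α s := by
  have := Real.rpow_pos_of_pos hs (-m)
  exact Real.rpow_pos_of_pos (by positivity) _

lemma barrierSlope_pow (hk : k ≠ 0) (hα : 0 < α) {s : ℝ} (hs : 0 < s) :
    barrierSlope k m α s ^ k = 1 + α * s ^ (-m) := by
  have := Real.rpow_pos_of_pos hs (-m)
  rw [barrierSlope, one_div, Real.rpow_inv_natCast_pow (by positivity) hk]

lemma barrierSlope_le_one_add (hk : k ≠ 0) (hα : 0 < α) {s : ℝ} (hs : 0 < s) :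
    barrierSlope k m α s ≤ 1 + α * s ^ (-m) := by
  have := Real.rpow_pos_of_pos hs (-m)
  refine Real.rpow_le_self_of_one_le (le_add_of_nonneg_right (by positivity)) ?_
  exact div_le_self zero_le_one (by exact_mod_cast Nat.one_le_iff_ne_zero.mpr hk)

lemma antitoneOn_barrierSlope (hm : 0 ≤ m) (hα : 0 ≤ α) :
    AntitoneOn (barrierSlope k m α) (Set.Ioi 0) := by
  intro s hs t ht hst
  have := Real.rpow_nonneg (le_of_lt ht) (-m)
  refine Real.rpow_le_rpow (by positivity) ?_ (by positivity)
  gcongr 1 + α * ?_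
  exact Real.rpow_le_rpow_of_nonpos hs hst (neg_nonpos.mpr hm)

lemma exists_barrierSlope_eq (hk : k ≠ 0) (m : ℝ) {s : ℝ} (hs : 0 < s) {Y : ℝ} (hY : 1 < Y) :
    ∃ α > 0, barrierSlope k m α s = Y := by
  refine ⟨(Y ^ k - 1) * s ^ m,
    mul_pos (sub_pos.mpr (one_lt_pow₀ hY hk)) (Real.rpow_pos_of_pos hs m), ?_⟩
  rw [barrierSlope, mul_assoc, ← Real.rpow_add hs, add_neg_cancel, Real.rpow_zero, mul_one,
    add_sub_cancel, one_div, Real.pow_rpow_inv_natCast (by linarith) hk]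

lemma hasDerivAt_barrierSlope (hα : 0 < α) {s : ℝ} (hs : 0 < s) :
    HasDerivAt (barrierSlope k m α)
      (-(m * (α * s ^ (-m)) / (k * s * (1 + α * s ^ (-m)))) * barrierSlope k m α s) s := by
  have hpos := Real.rpow_pos_of_pos hs (-m)
  have hbase : 0 < 1 + α * s ^ (-m) := add_pos one_pos (mul_pos hα hpos)
  convert! (((Real.hasDerivAt_rpow_const (p := -m) (Or.inl hs.ne')).const_mul α).const_add
    1).rpow_const (p := 1 / (k : ℝ)) (Or.inl hbase.ne') using 1
  rw [Real.rpow_sub_one hs.ne', Real.rpow_sub_one hbase.ne', barrierSlope]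
  generalize (1 + α * s ^ (-m)) ^ (1 / (k : ℝ)) = f
  rcases eq_or_ne k 0 with rfl | hk
  · simp
  · field_simp

/-- The primitive, vanishing at `R`, of `barrierSlope k m α`. The comparison function is
`barrier k m α R (½ xᵀ A x)`. -/
noncomputable def barrier (k : ℕ) (m α R s : ℝ) : ℝ := ∫ t in R..s, barrierSlope k m α t

lemma barrier_self (R : ℝ) : barrier k m α R R = 0 := intervalIntegral.integral_same

lemma continuousOn_barrierSlope (hα : 0 < α) :
    ContinuousOn (barrierSlope k m α) (Set.Ioi 0) := fun _ hs =>
  (hasDerivAt_barrierSlope hα hs).continuousAt.continuousWithinAt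

lemma intervalIntegrable_barrierSlope (hα : 0 < α) {R s : ℝ} (hR : 0 < R) (hs : 0 < s) :
    IntervalIntegrable (barrierSlope k m α) volume R s :=
  ((continuousOn_barrierSlope hα).mono fun _ ht =>
    (lt_min hR hs).trans_le ht.1).intervalIntegrable

lemma hasDerivAt_barrier (hα : 0 < α) {R s : ℝ} (hR : 0 < R) (hs : 0 < s) :
    HasDerivAt (barrier k m α R) (barrierSlope k m α s) s :=
  intervalIntegral.integral_hasDerivAt_right (intervalIntegrable_barrierSlope hα hR hs)
    ((continuousOn_barrierSlope hα).stronglyMeasurableAtFilter isOpen_Ioi s hs)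
    (hasDerivAt_barrierSlope hα hs).continuousAt

lemma barrier_le (hk : k ≠ 0) (hm : 1 < m) (hα : 0 < α) {R s : ℝ} (hR : 0 < R) (hs : R ≤ s) :
    barrier k m α R s ≤ s - R + α * R ^ (1 - m) / (m - 1) := by
  have hs₀ : 0 < s := hR.trans_le hs
  have hzero : (0 : ℝ) ∉ Set.uIcc R s := fun h => (lt_min hR hs₀).not_ge h.1
  have hint : IntervalIntegrable (fun t : ℝ => t ^ (-m)) volume R s :=
    intervalIntegral.intervalIntegrable_rpow (Or.inr hzero)
  calc barrier k m α R s ≤ ∫ t in R..s, (1 + α * t ^ (-m)) :=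
        intervalIntegral.integral_mono_on hs (intervalIntegrable_barrierSlope hα hR hs₀)
          (intervalIntegrable_const.add (hint.const_mul α)) fun t ht =>
            barrierSlope_le_one_add hk hα (hR.trans_le ht.1)
    _ = s - R + α * (R ^ (1 - m) - s ^ (1 - m)) / (m - 1) := by
        rw [intervalIntegral.integral_add intervalIntegrable_const (hint.const_mul α),
          intervalIntegral.integral_const, intervalIntegral.integral_const_mul,
          integral_rpow (Or.inr ⟨by linarith, hzero⟩), smul_eq_mul, mul_one,
          show -m + 1 = -(m - 1) by ring, div_neg, ← neg_div, neg_sub, mul_div_assoc,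
          neg_sub]
    _ ≤ s - R + α * R ^ (1 - m) / (m - 1) := by
        have := Real.rpow_nonneg hs₀.le (1 - m)
        have : 0 < m - 1 := sub_pos.mpr hm
        gcongr
        linarith

lemma exists_lt_barrier_two_mul (hk : k ≠ 0) (hm : 0 ≤ m) {R : ℝ} (hR : 0 < R) (T : ℝ) :
    ∃ α > 0, T < barrier k m α R (2 * R) := by
  have hY : 1 < |T| / R + 2 := by
    have : 0 ≤ |T| / R := by positivity
    linarith
  obtain ⟨α, hα, hslope⟩ := exists_barrierSlope_eq hk m (mul_pos two_pos hR) hY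
  refine ⟨α, hα, ?_⟩
  have hR₂ : R ≤ 2 * R := by linarith
  calc T < (2 * R - R) * (|T| / R + 2) := by
        have : (2 * R - R) * (|T| / R + 2) = |T| + 2 * R := by
          rw [show 2 * R - R = R by ring, mul_add, mul_div_cancel₀ _ hR.ne', mul_comm R]
        linarith [le_abs_self T]
    _ = ∫ _ in R..2 * R, (|T| / R + 2) := by
        rw [intervalIntegral.integral_const, smul_eq_mul]
    _ ≤ barrier k m α R (2 * R) :=
        intervalIntegral.integral_mono_on hR₂ intervalIntegrable_const
          (intervalIntegrable_barrierSlope hα hR (by linarith)) fun t ht => hslope ▸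
            antitoneOn_barrierSlope hm hα.le (hR.trans_le ht.1) (mul_pos two_pos hR) ht.2

open Matrix in
lemma isStrictSubsolutionAt_barrier_comp_quadA {n : ℕ} (hk1 : 1 ≤ k) (hkn : k ≤ n)
    {a : Fin n → ℝ} (ha : ∀ i, 0 < a i) (hSk : esymmOn a Finset.univ k = 1)
    (hm : ∀ i, ∀ j < k, m * (2 * (a i * esymmOn a (Finset.univ.erase i) j))
      < k * esymmOn a Finset.univ (j + 1))
    (hα : 0 < α) {R : ℝ} (hR : 0 < R) {z : Euc n} (hz : 0 < quadA n (diagonal a) z) :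
    IsStrictSubsolutionAt k (fun x => barrier k m α R (quadA n (diagonal a) x)) z := by
  have hβ : 0 < α * quadA n (diagonal a) z ^ (-m) := mul_pos hα (Real.rpow_pos_of_pos hz _)
  have hf := barrierSlope_pos (k := k) (m := m) hα hz
  have hlower := fun j (hj : j < k) =>
    lt_matSk_smul_diagonal_add_smul_vecMulVec ha hj hkn (fun i => hm i j hj) hz hf hβ
  refine ⟨_, ?_, hasLineHessAt_comp_quadA (isSymm_diagonal a) ?_
    (hasDerivAt_barrierSlope (k := k) (m := m) hα hz),
    fun j hj₁ hj => ?_, ?_⟩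
  · exact ((isSymm_diagonal a).smul _).add
      (IsSymm.smul (transpose_vecMulVec _ _) _)
  · filter_upwards [lt_mem_nhds hz] with s hs using hasDerivAt_barrier hα hR hs
  · obtain ⟨j, rfl⟩ := Nat.exists_eq_add_of_le' hj₁
    have hE : 0 < esymmOn a Finset.univ (j + 1) := esymmOn_pos ha (by simpa using hj.trans hkn)
    exact lt_trans (by positivity) (hlower j hj)
  · obtain ⟨j, rfl⟩ := Nat.exists_eq_add_of_le' hk1
    refine lt_of_eq_of_lt ?_ (hlower j j.lt_succ_self)
    rw [barrierSlope_pow j.succ_ne_zero hα hz, hSk, mul_one, div_self (by positivity)]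

end Barrier

section Comparison

variable {X : Type*} [TopologicalSpace X]

lemma le_of_forall_not_isLocalMin {F : Set X} {f : X → ℝ} {m : ℝ} (hF : IsClosed F)
    (hf : ContinuousOn f F) (hinfty : ∀ᶠ x in cocompact X ⊓ 𝓟 F, m ≤ f x)
    (hlow : ∀ x ∈ F, f x < m → F ∈ 𝓝 x ∧ ¬ IsLocalMin f x) : ∀ x ∈ F, m ≤ f x := by
  by_contra! ⟨x, hx, hxm⟩
  obtain ⟨z, hz, hmin⟩ := hf.exists_isMinOn' hF hx (hinfty.mono fun y hy => hxm.le.trans hy)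
  obtain ⟨hnhds, hnot⟩ := hlow z hz ((hmin hx).trans_lt hxm)
  exact hnot (hmin.isLocalMin hnhds)

/- If `u - w₁` has a negative minimum `μ` over `{s ≤ R₁} \ Ω`, then `w₂ < w₁` on `{s = R₀}` gives
`μ ≤ u - w₂` on `{R₀ ≤ s}` by the minimum principle, and `w₁ < w₂` on `{s = R₁}` keeps the minimum
point away from `{s = R₁}`. -/
lemma le_of_two_barriers {Ω : Set X} (hΩ : IsOpen Ω) {s w₁ w₂ u : X → ℝ} {R₀ R₁ : ℝ}
    (hR : R₀ < R₁) (hs : Continuous s) (hcompact : IsCompact {x | s x ≤ R₁})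
    (hΩs : ∀ x ∈ closure Ω, s x < R₀) (hu : ContinuousOn u Ωᶜ) (hw₁ : ContinuousOn w₁ Ωᶜ)
    (hw₂ : ContinuousOn w₂ {x | R₀ ≤ s x})
    (hmin₁ : ∀ x ∉ closure Ω, ¬ IsLocalMin (fun y => u y - w₁ y) x)
    (hmin₂ : ∀ x, R₀ < s x → ¬ IsLocalMin (fun y => u y - w₂ y) x)
    (h₀ : ∀ x, s x = R₀ → w₂ x < w₁ x) (h₁ : ∀ x, s x = R₁ → w₁ x < w₂ x)
    (hfrontier : ∀ x ∈ frontier Ω, w₁ x ≤ u x)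
    (hinfty : ∀ᶠ x in cocompact X ⊓ 𝓟 {x | R₀ ≤ s x}, w₂ x ≤ u x) {x : X} (hx : s x ≤ R₁)
    (hxΩ : x ∉ Ω) : w₁ x ≤ u x := by
  by_contra! hlt
  have hoff : ∀ y, R₀ ≤ s y → y ∉ closure Ω := fun y hy hyΩ => (hΩs y hyΩ).not_ge hy
  obtain ⟨z, ⟨hzR, hzΩ⟩, hzmin⟩ := (hcompact.diff hΩ).exists_isMinOn ⟨x, hx, hxΩ⟩
    ((hu.sub hw₁).mono fun y hy => hy.2)
  have hneg : u z - w₁ z < 0 := (hzmin ⟨hx, hxΩ⟩).trans_lt (sub_neg.mpr hlt)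
  have houter : ∀ y ∈ {y | R₀ ≤ s y}, u z - w₁ z ≤ u y - w₂ y := by
    refine le_of_forall_not_isLocalMin (isClosed_le continuous_const hs)
      ((hu.mono fun y hy hyΩ => hoff y hy (subset_closure hyΩ)).sub hw₂) ?_ fun y hy hyz => ?_
    · filter_upwards [hinfty] with y hy using hneg.le.trans (sub_nonneg.mpr hy)
    · have hlt : R₀ < s y := by
        refine lt_of_le_of_ne hy fun heq => ?_
        have hzy : u z - w₁ z ≤ u y - w₁ y :=
          hzmin ⟨heq.symm.trans_le hR.le, fun hyΩ => hoff y hy (subset_closure hyΩ)⟩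
        linarith [h₀ y heq.symm]
      exact ⟨(hs.continuousAt.eventually_const_lt hlt).mono fun _ h => h.le, hmin₂ y hlt⟩
  have hzcl : z ∉ closure Ω := fun hzcl =>
    hneg.not_ge (sub_nonneg.mpr (hfrontier z (hΩ.frontier_eq ▸ ⟨hzcl, hzΩ⟩)))
  have hzlt : s z < R₁ := lt_of_le_of_ne hzR fun heq => by
    linarith [h₁ z heq, houter z (hR.le.trans heq.ge)]
  refine hmin₁ z hzcl (hzmin.isLocalMin ?_)
  filter_upwards [hs.continuousAt.eventually_lt_const hzlt,
    isClosed_closure.isOpen_compl.mem_nhds hzcl] with y hy hycl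
    using ⟨hy.le, fun hyΩ => hycl (subset_closure hyΩ)⟩

end Comparison

section Extension

variable {n k : ℕ}

/-- The class `Φ^k(ℝⁿ)` of proper generalized `k`-convex functions. Properness is automatic because
`f` is real-valued. -/
def IsGenKConvex (n k : ℕ) (f : Euc n → ℝ) : Prop :=
  UpperSemicontinuous f ∧ ∀ (M : Matrix (Fin n) (Fin n) ℝ) (p : Euc n) (r : ℝ), M.IsSymm →
    (∃ z : Euc n, IsLocalMax (fun x => f x - (quadA n M x + linB n p x + r)) z) →
    0 ≤ matSk n k M

lemma upperSemicontinuous_extBy {Ω : Set (Euc n)} (hΩ : IsOpen Ω) {v : ℝ} {u : Euc n → ℝ}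
    (hu : ContinuousOn u Ωᶜ) (hv : ∀ x ∈ frontier Ω, v ≤ u x) :
    UpperSemicontinuous (extBy n Ω v u) := by
  intro z y hzy
  by_cases hz : z ∈ Ω
  · filter_upwards [hΩ.mem_nhds hz] with x hx
    simpa only [extBy, if_pos hx, if_pos hz] using hzy
  · simp only [extBy, if_neg hz] at hzy
    have hout : ∀ᶠ x in 𝓝 z, x ∈ Ωᶜ → u x < y :=
      eventually_nhdsWithin_iff.mp ((hu z hz).eventually (gt_mem_nhds hzy))
    have hin : ∀ᶠ x in 𝓝 z, x ∈ Ω → v < y := by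
      by_cases hcl : z ∈ closure Ω
      · exact Eventually.of_forall fun _ _ => (hv z (hΩ.frontier_eq ▸ ⟨hcl, hz⟩)).trans_lt hzy
      · filter_upwards [isClosed_closure.isOpen_compl.mem_nhds hcl] with x hx hxΩ
        exact absurd (subset_closure hxΩ) hx
    filter_upwards [hout, hin] with x hxout hxin
    by_cases hx : x ∈ Ω
    · simpa only [extBy, if_pos hx] using hxin hx
    · simpa only [extBy, if_neg hx] using hxout hx

variable {M : Matrix (Fin n) (Fin n) ℝ} {p z : Euc n} {r : ℝ}

lemma matSk_nonneg_of_isLocalMin_quadratic (hkn : k ≤ n) (hM : M.IsSymm)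
    (hmin : IsLocalMin (fun x => quadA n M x + linB n p x + r) z) : 0 ≤ matSk n k M :=
  matSk_nonneg_of_posSemidef
    ((hasLineHessAt_quadratic hM p r z).posSemidef_of_isLocalMin hM hmin) hkn

lemma matSk_nonneg_of_isLocalMax_sub_quadratic (hk1 : 1 ≤ k) (hkn : k ≤ n) {u : Euc n → ℝ}
    (hu : ContDiffAt ℝ 2 u z) (hcone : InGardingCone k (hessMat n u z)) (hM : M.IsSymm)
    (hmax : IsLocalMax (fun x => u x - (quadA n M x + linB n p x + r)) z) :
    0 ≤ matSk n k M := by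
  have hmin : IsLocalMin (fun x => quadA n M x + linB n p x + r - u x) z := by
    simpa only [neg_sub] using hmax.neg
  have hpsd := ((hasLineHessAt_quadratic hM p r z).sub
    (hasLineHessAt_hessMat hu)).posSemidef_of_isLocalMin (hM.sub (hessMat_isSymm hu)) hmin
  have hle := matSk_le_add_posSemidef hkn (hessMat_isSymm hu) hcone hpsd hk1 le_rfl
  rw [add_sub_cancel] at hle
  exact (hcone k hk1 le_rfl).le.trans hle

lemma isGenKConvex_extBy_zero (hk1 : 1 ≤ k) (hkn : k ≤ n) {Ω : Set (Euc n)} (hΩ : IsOpen Ω)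
    {u : Euc n → ℝ} (hcont : ContinuousOn u Ωᶜ) (hu : ∀ x ∉ closure Ω, ContDiffAt ℝ 2 u x)
    (hconvex : KConvexOn n k u (closure Ω)ᶜ) (hzero : ∀ x ∈ frontier Ω, u x = 0)
    (hnonneg : ∀ x ∈ frontier Ω, ∀ᶠ y in 𝓝[Ωᶜ] x, 0 ≤ u y) :
    IsGenKConvex n k (extBy n Ω 0 u) := by
  refine ⟨upperSemicontinuous_extBy hΩ hcont fun x hx => (hzero x hx).ge, ?_⟩
  rintro M p r hM ⟨z, hmax⟩
  by_cases hcl : z ∈ closure Ω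
  · have hz : extBy n Ω 0 u z = 0 := by
      by_cases hz : z ∈ Ω
      · exact if_pos hz
      · exact (if_neg hz).trans (hzero z (hΩ.frontier_eq ▸ ⟨hcl, hz⟩))
    have hge : ∀ᶠ x in 𝓝 z, 0 ≤ extBy n Ω 0 u x := by
      by_cases hz : z ∈ Ω
      · filter_upwards [hΩ.mem_nhds hz] with x hx using (if_pos hx).ge
      · filter_upwards [eventually_nhdsWithin_iff.mp
          (hnonneg z (hΩ.frontier_eq ▸ ⟨hcl, hz⟩))] with x hx
        rw [extBy]
        split_ifs with h
        exacts [le_rfl, hx h]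
    refine matSk_nonneg_of_isLocalMin_quadratic (p := p) (r := r) (z := z) hkn hM ?_
    filter_upwards [hmax, hge] with x hx hx₀
    linarith
  · have hext : extBy n Ω 0 u =ᶠ[𝓝 z] u := by
      filter_upwards [isClosed_closure.isOpen_compl.mem_nhds hcl] with x hx
      exact if_neg fun h => hx (subset_closure h)
    exact matSk_nonneg_of_isLocalMax_sub_quadratic hk1 hkn (hu z hcl) (hconvex z hcl) hM
      (hmax.congr (hext.sub EventuallyEq.rfl))

end Extension

section ExteriorProblem

open Matrix

variable {n k : ℕ} {a : Fin n → ℝ}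

lemma continuous_quadA (M : Matrix (Fin n) (Fin n) ℝ) : Continuous (quadA n M) := by
  unfold quadA
  fun_prop

lemma exists_mul_norm_sq_le_quadA_diagonal (ha : ∀ i, 0 < a i) :
    ∃ δ > 0, ∀ x, δ * ‖x‖ ^ 2 ≤ quadA n (diagonal a) x := by
  have hbelow : ∀ᶠ δ in 𝓝[>] (0 : ℝ), ∀ i, δ < a i :=
    Filter.eventually_all.mpr fun i => eventually_nhdsWithin_of_eventually_nhds
      (gt_mem_nhds (ha i))
  obtain ⟨δ, hδ, hδ₀⟩ := (hbelow.and self_mem_nhdsWithin).exists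
  refine ⟨δ / 2, half_pos hδ₀, fun x => ?_⟩
  rw [quadA_diagonal, EuclideanSpace.norm_sq_eq, div_mul_eq_mul_div, Finset.mul_sum]
  simp only [Real.norm_eq_abs, sq_abs]
  gcongr with i
  exact (hδ i).le

lemma isCompact_quadA_diagonal_le (ha : ∀ i, 0 < a i) (R : ℝ) :
    IsCompact {x | quadA n (diagonal a) x ≤ R} := by
  obtain ⟨δ, hδ, hle⟩ := exists_mul_norm_sq_le_quadA_diagonal ha
  have htop : Tendsto (quadA n (diagonal a)) (cocompact (Euc n)) atTop :=
    tendsto_atTop_mono hle (((tendsto_pow_atTop two_ne_zero).comp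
      (tendsto_norm_cocompact_atTop (E := Euc n))).const_mul_atTop hδ)
  obtain ⟨K, hK, hKR⟩ := mem_cocompact'.mp (htop.eventually_gt_atTop R)
  exact hK.of_isClosed_subset (isClosed_le (continuous_quadA _) continuous_const)
    fun _ hx => hKR fun hlt => lt_irrefl R (lt_of_lt_of_le hlt hx)

lemma exists_closedBall_subset_quadA_lt (M : Matrix (Fin n) (Fin n) ℝ) (ρ : ℝ) :
    ∃ R > 0, Metric.closedBall 0 ρ ⊆ {x | quadA n M x < R} := by
  obtain ⟨B, hB⟩ := (isCompact_closedBall (0 : Euc n) ρ).bddAbove_image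
    (continuous_quadA M).continuousOn
  exact ⟨max (B + 1) 1, by positivity, fun x hx =>
    (hB (Set.mem_image_of_mem _ hx)).trans_lt ((lt_add_one B).trans_le (le_max_left _ _))⟩

lemma exists_norm_sub_le_of_quadA_diagonal_le (ha : ∀ i, 0 < a i) (R ρ : ℝ) :
    ∃ T, ∀ x y : Euc n, quadA n (diagonal a) x ≤ R → y ∈ Metric.closedBall 0 ρ →
      ‖x - y‖ ≤ T := by
  obtain ⟨r, hr⟩ := (isCompact_quadA_diagonal_le ha R).isBounded.subset_closedBall 0
  refine ⟨r + ρ, fun x y hx hy => (norm_sub_le x y).trans (add_le_add ?_ ?_)⟩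
  · exact mem_closedBall_zero_iff.mp (hr hx)
  · exact mem_closedBall_zero_iff.mp hy

lemma SmoothOnNhd.contDiffAt {u : Euc n → ℝ} {S : Set (Euc n)} (hu : SmoothOnNhd n u S)
    {z : Euc n} (hz : z ∈ S) : ContDiffAt ℝ 2 u z := by
  obtain ⟨U, hU, hSU, hsmooth⟩ := hu
  exact (hsmooth.contDiffAt (hU.mem_nhds (hSU hz))).of_le
    (WithTop.coe_le_coe.mpr (le_top : (2 : ℕ∞) ≤ ⊤))

variable {x₀ : Euc n} {ε c ρ m α R : ℝ} {u : Euc n → ℝ}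

lemma ExtBallSol.contDiffAt (hu : ExtBallSol n k a x₀ ε c u) {z : Euc n}
    (hz : z ∉ Metric.ball x₀ ε) : ContDiffAt ℝ 2 u z :=
  hu.1.contDiffAt hz

lemma ExtBallSol.continuousOn (hu : ExtBallSol n k a x₀ ε c u) :
    ContinuousOn u (Metric.ball x₀ ε)ᶜ :=
  fun _ hz => (hu.contDiffAt hz).continuousAt.continuousWithinAt

lemma ExtBallSol.not_isLocalMin_sub (hk1 : 1 ≤ k) (hkn : k ≤ n)
    (hu : ExtBallSol n k a x₀ ε c u) {w : Euc n → ℝ} {z : Euc n}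
    (hz : z ∉ closure (Metric.ball x₀ ε)) (hw : IsStrictSubsolutionAt k w z) :
    ¬ IsLocalMin (fun x => u x - w x) z :=
  hw.not_isLocalMin_sub hk1 hkn (hu.contDiffAt fun h => hz (subset_closure h)) (hu.2.2.1 z hz)

lemma ExtBallSol.eventually_barrier_le (hk : k ≠ 0) (hm : 1 < m) (hα : 0 < α) (hR : 0 < R)
    (hc : 1 - R + α * R ^ (1 - m) / (m - 1) ≤ c) (hu : ExtBallSol n k a x₀ ε c u) :
    ∀ᶠ x in cocompact (Euc n) ⊓ 𝓟 {x | R ≤ quadA n (diagonal a) x},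
      barrier k m α R (quadA n (diagonal a) x) ≤ u x := by
  have hnear : ∀ᶠ x in cocompact (Euc n), -1 < u x - (quadA n (diagonal a) x + c) :=
    hu.2.2.2.2.eventually (lt_mem_nhds (by norm_num))
  refine eventually_inf_principal.mpr ?_
  filter_upwards [hnear] with x hx hxR
  linarith [barrier_le hk hm hα hR hxR]

/-- Data for the outer comparison function `barrier k m α R (½ xᵀ A x)`: it is a strict subsolution,
`R` puts its zero level outside `closedBall 0 ρ`, and at level `2 R` it dominates `|x - y|²` for all
`y ∈ closedBall 0 ρ`. -/
structure IsAdmissibleBarrier (k : ℕ) (a : Fin n → ℝ) (ρ m α R : ℝ) : Prop where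
  one_lt : 1 < m
  pos_coeff : 0 < α
  pos_level : 0 < R
  slack : ∀ i, ∀ j < k, m * (2 * (a i * esymmOn a (Finset.univ.erase i) j))
    < k * esymmOn a Finset.univ (j + 1)
  closedBall_subset : Metric.closedBall 0 ρ ⊆ {x | quadA n (diagonal a) x < R}
  norm_sub_sq_lt : ∀ x y : Euc n, quadA n (diagonal a) x = 2 * R → y ∈ Metric.closedBall 0 ρ →
    ‖x - y‖ ^ 2 < barrier k m α R (2 * R)

lemma exists_isAdmissibleBarrier (hn : 3 ≤ n) (hk1 : 1 ≤ k) (hkn : k ≤ n) (ha : ∀ i, 0 < a i)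
    (hSk : esymmOn a Finset.univ k = 1) (hhalf : k = 1 → ∀ i, a i < 1 / 2) (ρ : ℝ) :
    ∃ m α R, IsAdmissibleBarrier k a ρ m α R := by
  obtain ⟨m, hm, hslack⟩ := exists_one_lt_mul_esymmOn_erase_lt fun i j hj =>
    two_mul_mul_esymmOn_erase_lt hn hkn ha hSk hhalf i hj
  obtain ⟨R, hR, hball⟩ := exists_closedBall_subset_quadA_lt (diagonal a) ρ
  obtain ⟨T, hT⟩ := exists_norm_sub_le_of_quadA_diagonal_le ha (2 * R) ρ
  obtain ⟨α, hα, hlt⟩ := exists_lt_barrier_two_mul (m := m) (Nat.one_le_iff_ne_zero.mp hk1)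
    (by linarith) hR (T ^ 2)
  exact ⟨m, α, R, hm, hα, hR, hslack, hball, fun x y hx hy =>
    (pow_le_pow_left₀ (norm_nonneg _) (hT x y hx.le hy) 2).trans_lt hlt⟩

lemma ExtBallSol.norm_sub_sq_sub_sq_le (hk1 : 1 ≤ k) (hkn : k ≤ n) (ha : ∀ i, 0 < a i)
    (hSk : esymmOn a Finset.univ k = 1) (hb : IsAdmissibleBarrier k a ρ m α R)
    (hc : 1 - R + α * R ^ (1 - m) / (m - 1) ≤ c) (hε : 0 < ε)
    (hball : Metric.ball x₀ ε ⊆ Metric.closedBall 0 ρ) (hu : ExtBallSol n k a x₀ ε c u)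
    {x : Euc n} (hx : quadA n (diagonal a) x ≤ 2 * R) (hxε : x ∉ Metric.ball x₀ ε) :
    ‖x - x₀‖ ^ 2 - ε ^ 2 ≤ u x := by
  have hR := hb.pos_level
  have hΩs : ∀ x ∈ closure (Metric.ball x₀ ε), quadA n (diagonal a) x < R := fun x hx =>
    hb.closedBall_subset (closure_minimal hball Metric.isClosed_closedBall hx)
  refine le_of_two_barriers (R₀ := R) (w₁ := fun x => ‖x - x₀‖ ^ 2 - ε ^ 2)
    (w₂ := fun x => barrier k m α R (quadA n (diagonal a) x)) Metric.isOpen_ball (by linarith)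
    (continuous_quadA _) (isCompact_quadA_diagonal_le ha _) hΩs hu.continuousOn
    (by fun_prop) ?continuousOn
    (fun z hz => hu.not_isLocalMin_sub hk1 hkn hz
      (isStrictSubsolutionAt_norm_sub_sq hk1 hkn x₀ z ε))
    (fun z hz => hu.not_isLocalMin_sub hk1 hkn (fun h => hz.not_gt (hΩs z h))
      (isStrictSubsolutionAt_barrier_comp_quadA hk1 hkn ha hSk hb.slack hb.pos_coeff hR
        (hR.trans hz)))
    ?inner ?outer ?sphere (hu.eventually_barrier_le (by omega) hb.one_lt hb.pos_coeff hR hc) hx hxε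
  case continuousOn =>
    exact fun z hz => ((hasDerivAt_barrier hb.pos_coeff hR (hR.trans_le hz)).continuousAt.comp
      (continuous_quadA _).continuousAt).continuousWithinAt
  case inner =>
    intro z hz
    have hzε : ε < ‖z - x₀‖ := by
      have hzball : z ∉ closure (Metric.ball x₀ ε) := fun h => (hΩs z h).ne hz
      rwa [closure_ball x₀ hε.ne', mem_closedBall_iff_norm, not_le] at hzball
    simp only [hz, barrier_self]
    exact sub_pos.mpr (pow_lt_pow_left₀ hzε hε.le two_ne_zero)
  case outer =>
    intro z hz
    have hx₀ := hball (Metric.mem_ball_self hε)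
    simp only [hz]
    linarith [hb.norm_sub_sq_lt z x₀ hz hx₀, sq_nonneg ε]
  case sphere =>
    intro z hz
    rw [frontier_ball x₀ hε.ne'] at hz
    rw [hu.2.2.2.1 z hz, mem_sphere_iff_norm.mp hz, sub_self]

lemma ExtBallSol.eventually_nonneg (hk1 : 1 ≤ k) (hkn : k ≤ n) (ha : ∀ i, 0 < a i)
    (hSk : esymmOn a Finset.univ k = 1) (hb : IsAdmissibleBarrier k a ρ m α R)
    (hc : 1 - R + α * R ^ (1 - m) / (m - 1) ≤ c) (hε : 0 < ε)
    (hball : Metric.ball x₀ ε ⊆ Metric.closedBall 0 ρ) (hu : ExtBallSol n k a x₀ ε c u)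
    {z : Euc n} (hz : z ∈ closure (Metric.ball x₀ ε)) :
    ∀ᶠ x in 𝓝[(Metric.ball x₀ ε)ᶜ] z, 0 ≤ u x := by
  have hzR : quadA n (diagonal a) z < 2 * R := by
    have : quadA n (diagonal a) z < R :=
      hb.closedBall_subset (closure_minimal hball Metric.isClosed_closedBall hz)
    linarith [hb.pos_level]
  refine eventually_nhdsWithin_iff.mpr ?_
  filter_upwards [(continuous_quadA _).continuousAt.eventually_lt_const hzR] with x hx hxε
  refine le_trans (sub_nonneg.mpr ?_)
    (hu.norm_sub_sq_sub_sq_le hk1 hkn ha hSk hb hc hε hball hx.le hxε)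
  exact pow_le_pow_left₀ hε.le (not_lt.mp fun h => hxε (mem_ball_iff_norm.mpr h)) 2

end ExteriorProblem

theorem statement13_general (n k : ℕ) (hn : 3 ≤ n) (hk1 : 1 ≤ k) (hkn : k ≤ n)
    (a : Fin n → ℝ) (hA : MemA n k (Matrix.diagonal a))
    (hk1' : k = 1 → (⨆ i, a i) < 1 / 2) (ρ : ℝ) :
    ∃ cstar : ℝ, 0 < cstar ∧ ∀ c : ℝ, cstar ≤ c → ∀ (x₀ : Euc n) (ε : ℝ), 0 < ε →
      Metric.ball x₀ ε ⊆ Metric.closedBall 0 ρ →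
      ∀ u : Euc n → ℝ, ExtBallSol n k a x₀ ε c u →
        IsGenKConvex n k (extBy n (Metric.ball x₀ ε) 0 u) := by
  obtain ⟨-, hposDef, hSk⟩ := hA
  have ha : ∀ i, 0 < a i := Matrix.posDef_diagonal_iff.mp hposDef
  rw [matSk_diagonal a hkn] at hSk
  have hhalf : k = 1 → ∀ i, a i < 1 / 2 := fun hk i =>
    (le_ciSup (Set.finite_range a).bddAbove i).trans_lt (hk1' hk)
  obtain ⟨m, α, R, hb⟩ := exists_isAdmissibleBarrier hn hk1 hkn ha hSk hhalf ρ
  refine ⟨max (1 - R + α * R ^ (1 - m) / (m - 1)) 1, by positivity,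
    fun c hc x₀ ε hε hball u hu => ?_⟩
  obtain ⟨-, hconvex, -, hsphere, -⟩ := id hu
  refine isGenKConvex_extBy_zero hk1 hkn Metric.isOpen_ball hu.continuousOn
    (fun x hx => hu.contDiffAt fun h => hx (subset_closure h)) hconvex ?_ ?_
  · rwa [frontier_ball x₀ hε.ne']
  · exact fun z hz => hu.eventually_nonneg hk1 hkn ha hSk hb ((le_max_left _ _).trans hc) hε hball
      (frontier_subset_closure hz)

/-- Lemma 3.3: the zero-extension `ũ^ε` is a proper generalized
`k`-convex function on all of `ℝⁿ`, i.e. `ũ^ε ∈ Φ^k(ℝⁿ)`: it is upper semicontinuous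
and `S_k(D²q) ≥ 0` for every quadratic polynomial `q` such that `ũ^ε - q` attains
a finite local maximum. -/
theorem statement13 (n k : ℕ) (hn : 3 ≤ n) (hk1 : 1 ≤ k) (hkn : k ≤ n)
    (a : Fin n → ℝ) (hA : MemA n k (Matrix.diagonal a))
    (hk1' : k = 1 → (⨆ i, a i) < 1 / 2)
    (x₀ : Euc n) (hx₀ : x₀ ∈ Metric.ball (0 : Euc n) (1 / 2)) (hx₀' : x₀ ≠ 0) :
    ∃ cstar : ℝ, 0 < cstar ∧ ∀ c : ℝ, cstar ≤ c →
      ∀ ε : ℝ, 0 < ε → ε < 1 / 2 →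
      ∀ u : Euc n → ℝ, ExtBallSol n k a x₀ ε c u →
        UpperSemicontinuous (extBy n (Metric.ball x₀ ε) 0 u) ∧
        ∀ (M : Matrix (Fin n) (Fin n) ℝ) (p : Euc n) (r : ℝ), M.IsSymm →
          (∃ z : Euc n, IsLocalMax
            (fun x => extBy n (Metric.ball x₀ ε) 0 u x - (quadA n M x + linB n p x + r)) z) →
          0 ≤ matSk n k M := by
  obtain ⟨cstar, hcstar, hconvex⟩ := statement13_general n k hn hk1 hkn a hA hk1' 1
  have hball : ∀ ε < (1 / 2 : ℝ), Metric.ball x₀ ε ⊆ Metric.closedBall 0 1 := fun ε hε =>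
    (Metric.ball_subset_ball' (by linarith [Metric.mem_ball.mp hx₀])).trans
      Metric.ball_subset_closedBall
  exact ⟨cstar, hcstar, fun c hc ε hε hε' => hconvex c hc x₀ ε hε (hball ε hε')⟩
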